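/- arXiv:0803.3469 — 2 statements merged into one kernel-verified Lean document; each statement's English description precedes it below -/
import Mathlib

section
/- For all nonnegative integers n, m, i, the counting functions satisfy the recursion N(n,m+1;i+1) = N(n,m;i) + (2^{i+1} − 2^m) · N(n,m;i+1), an identity in ℤ (when m > i+1 the second summand is zero since then N(n,m;i+1) = 0). -/
open scoped BigOperators

abbrev ThetaChar (g : ℕ) := (Fin g → ZMod 2) × (Fin g → ZMod 2)

/-- Theta constant with characteristic `v = [ε; δ]`. -/
noncomputable def theta {g : ℕ} (v : ThetaChar g) (τ : Matrix (Fin g) (Fin g) ℂ) : ℂ :=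
  ∑' n : Fin g → ℤ,
    Complex.exp ((Real.pi : ℂ) * Complex.I *
      ((∑ i, ∑ j, ((n i : ℂ) + ((v.1 i).val : ℂ) / 2) * τ i j *
          ((n j : ℂ) + ((v.1 j).val : ℂ) / 2)) +
        ∑ i, ((n i : ℂ) + ((v.1 i).val : ℂ) / 2) * ((v.2 i).val : ℂ)))

/-- Siegel upper half-space membership. -/
def IsSiegel {g : ℕ} (τ : Matrix (Fin g) (Fin g) ℂ) : Prop :=
  τ.IsSymm ∧ Matrix.PosDef (τ.map Complex.im)

noncomputable def Pset {g : ℕ} (M : Set (ThetaChar g)) (τ : Matrix (Fin g) (Fin g) ℂ) : ℂ :=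
  ∏ᶠ v ∈ M, theta v τ

noncomputable def Pform (g i s : ℕ) (τ : Matrix (Fin g) (Fin g) ℂ) : ℂ :=
  ∑ᶠ V ∈ {V : Submodule (ZMod 2) (ThetaChar g) | Module.finrank (ZMod 2) ↥V = i},
    Pset (V : Set (ThetaChar g)) τ ^ s

noncomputable def Nsub (n m i : ℕ) : ℕ :=
  Nat.card {V : Submodule (ZMod 2) ((Fin n → ZMod 2) × (Fin m → ZMod 2)) //
    Module.finrank (ZMod 2) ↥V = i ∧
    V.map (LinearMap.fst (ZMod 2) (Fin n → ZMod 2) (Fin m → ZMod 2)) = ⊤ ∧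
    V.map (LinearMap.snd (ZMod 2) (Fin n → ZMod 2) (Fin m → ZMod 2)) = ⊤}

noncomputable def blockDiag {k l : ℕ} (τ₁ : Matrix (Fin k) (Fin k) ℂ)
    (τ₂ : Matrix (Fin l) (Fin l) ℂ) : Matrix (Fin (k + l)) (Fin (k + l)) ℂ :=
  Matrix.reindex finSumFinEquiv finSumFinEquiv (Matrix.fromBlocks τ₁ 0 0 τ₂)

def chproj1 (k l : ℕ) : ThetaChar (k + l) →ₗ[ZMod 2] ThetaChar k :=
  (LinearMap.funLeft (ZMod 2) (ZMod 2) (Fin.castAdd l)).prodMap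
    (LinearMap.funLeft (ZMod 2) (ZMod 2) (Fin.castAdd l))

def chproj2 (k l : ℕ) : ThetaChar (k + l) →ₗ[ZMod 2] ThetaChar l :=
  (LinearMap.funLeft (ZMod 2) (ZMod 2) (Fin.natAdd k)).prodMap
    (LinearMap.funLeft (ZMod 2) (ZMod 2) (Fin.natAdd k))

def weil {g : ℕ} (v w : ThetaChar g) : ZMod 2 :=
  (∑ i, v.1 i * w.2 i) + (∑ i, v.2 i * w.1 i)

def evenChar {g : ℕ} (v : ThetaChar g) : Prop := (∑ i, v.1 i * v.2 i) = 0

def qform {g : ℕ} (Δ v : ThetaChar g) : ZMod 2 :=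
  (∑ i, v.1 i * v.2 i) + (∑ i, Δ.1 i * v.2 i) + (∑ i, Δ.2 i * v.1 i)

/-!
Over a field `K` with `q` elements, put `W = X × Y` and write the larger ambient space as `W × K`.
A subspace `V` of `W × K` containing `(0, 1)` is the full preimage of its projection to `W`, whose
dimension is one less: this gives the first summand. Any other `V` is the graph of a functional `φ`
on its projection `U`. This graph surjects onto `Y × K` exactly when `U` surjects onto `Y` and `φ`
does not factor through `U → Y`, which excludes `q ^ dim Y` of the `q ^ dim U` functionals.
-/

open Module

section Counting

variable (K X Y : Type*) [Field K] [AddCommGroup X] [Module K X] [AddCommGroup Y] [Module K Y]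

/-- The number of `i`-dimensional subspaces of `X × Y` that project onto both factors, that is,
`N(n, m; i)` for arbitrary vector spaces `X`, `Y` in place of `𝔽₂ⁿ`, `𝔽₂ᵐ`. It is the junk value `0`
if there are infinitely many such subspaces. -/
noncomputable def subdirectCount (i : ℕ) : ℕ :=
  Nat.card {V : Submodule K (X × Y) // finrank K V = i ∧
    V.map (LinearMap.fst K X Y) = ⊤ ∧ V.map (LinearMap.snd K X Y) = ⊤}

end Counting

section Modules

variable {R M N F : Type*} [Ring R] [AddCommGroup M] [Module R M] [AddCommGroup N] [Module R N]
  [AddCommGroup F] [Module R F]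

theorem comap_fst_map_fst_of_zero_one_mem {V : Submodule R (M × R)}
    (hV : ((0, 1) : M × R) ∈ V) :
    (V.map (LinearMap.fst R M R)).comap (LinearMap.fst R M R) = V := by
  rw [Submodule.comap_map_eq, sup_eq_left, LinearMap.ker_fst]
  rintro _ ⟨t, rfl⟩
  simpa using V.smul_mem t hV

theorem map_prodMap_comap_fst_eq_top_iff (g : M →ₗ[R] N) (U : Submodule R M) :
    (U.comap (LinearMap.fst R M F)).map (g.prodMap LinearMap.id) = ⊤ ↔ U.map g = ⊤ := by
  rw [Submodule.comap_fst, LinearMap.prodMap_map_prod, Submodule.map_id,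
    Submodule.prod_eq_top_iff, and_iff_left rfl]

theorem graph_eq_range_prod (p : M →ₗ.[R] F) :
    p.graph = LinearMap.range (p.domain.subtype.prod p.toFun) := by
  ext v
  rw [LinearPMap.mem_graph_iff', LinearMap.mem_range]
  rfl

theorem finrank_graph (p : M →ₗ.[R] F) : finrank R p.graph = finrank R p.domain := by
  rw [graph_eq_range_prod]
  exact LinearMap.finrank_range_of_inj fun _ _ h => Subtype.ext (congrArg Prod.fst h)

end Modules

section SubspacesOfProdField

variable {K W Y : Type*} [Field K] [AddCommGroup W] [Module K W] [AddCommGroup Y] [Module K Y]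

theorem graph_toLinearPMap_of_zero_one_notMem {V : Submodule K (W × K)}
    (hV : ((0, 1) : W × K) ∉ V) : V.toLinearPMap.graph = V := by
  refine Submodule.toLinearPMap_graph_eq V ?_
  rintro ⟨w, t⟩ hwt (rfl : w = 0)
  by_contra ht
  exact hV (by simpa [inv_mul_cancel₀ ht] using V.smul_mem t⁻¹ hwt)

theorem zero_one_notMem_graph (p : W →ₗ.[K] K) : ((0, 1) : W × K) ∉ p.graph := fun h =>
  one_ne_zero (p.graph_fst_eq_zero_snd h rfl)

theorem bijective_sumElim_comap_fst_graph :
    Function.Bijective (Sum.elim (fun U : Submodule K W => U.comap (LinearMap.fst K W K))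
      (LinearPMap.graph : (W →ₗ.[K] K) → Submodule K (W × K))) := by
  refine ⟨Function.Injective.sumElim ?_ ?_ ?_, fun V => ?_⟩
  · exact Submodule.comap_injective_of_surjective LinearMap.fst_surjective
  · exact fun _ _ => LinearPMap.eq_of_eq_graph
  · intro U p h
    exact zero_one_notMem_graph p (h ▸ by simp)
  · by_cases hV : ((0, 1) : W × K) ∈ V
    · exact ⟨.inl _, comap_fst_map_fst_of_zero_one_mem hV⟩
    · exact ⟨.inr _, graph_toLinearPMap_of_zero_one_notMem hV⟩

theorem finrank_comap_fst {F : Type*} [AddCommGroup F] [Module K F] [FiniteDimensional K W]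
    [FiniteDimensional K F] (U : Submodule K W) :
    finrank K (U.comap (LinearMap.fst K W F)) = finrank K U + finrank K F := by
  have hrange : U.comap (LinearMap.fst K W F) =
      LinearMap.range (U.subtype.prodMap (LinearMap.id : F →ₗ[K] F)) := by
    rw [LinearMap.range_prodMap, Submodule.range_subtype, LinearMap.range_id, Submodule.comap_fst]
  have hinj : Function.Injective (U.subtype.prodMap (LinearMap.id : F →ₗ[K] F)) :=
    U.injective_subtype.prodMap Function.injective_id
  rw [hrange, LinearMap.finrank_range_of_inj hinj, finrank_prod]

theorem surjective_prod_iff_notMem_range_dualMap (f : W →ₗ[K] Y) (φ : Dual K W) :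
    Function.Surjective (f.prod φ) ↔
      Function.Surjective f ∧ φ ∉ LinearMap.range f.dualMap := by
  constructor
  · refine fun h => ⟨fun y => (h (y, 0)).imp fun _ hw => congrArg Prod.fst hw, ?_⟩
    rintro ⟨ψ, rfl⟩
    obtain ⟨w, hw⟩ := h (0, 1)
    obtain ⟨hfw : f w = 0, hψ : ψ (f w) = 1⟩ := Prod.ext_iff.1 hw
    simp [hfw] at hψ
  · rintro ⟨hf, hφ⟩
    rw [LinearMap.range_dualMap_eq_dualAnnihilator_ker, Submodule.mem_dualAnnihilator] at hφ
    push Not at hφ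
    obtain ⟨w, hw, hφw⟩ := hφ
    have hsup : LinearMap.ker f ⊔ LinearMap.ker φ = ⊤ := by
      rw [eq_top_iff, ← φ.span_singleton_sup_ker_eq_top hφw]
      exact sup_le_sup_right ((Submodule.span_singleton_le_iff_mem _ _).2 hw) _
    have hφ_range : LinearMap.range φ = ⊤ :=
      LinearMap.range_eq_top.2 (LinearMap.surjective (fun h => hφw (by simp [h])))
    rw [← LinearMap.range_eq_top, LinearMap.range_prod_eq hsup, LinearMap.range_eq_top.2 hf,
      hφ_range, Submodule.prod_top]

theorem map_prodMap_graph_eq_top_iff (g : W →ₗ[K] Y) (p : W →ₗ.[K] K) :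
    p.graph.map (g.prodMap LinearMap.id) = ⊤ ↔
      p.domain.map g = ⊤ ∧ p.toFun ∉ LinearMap.range (g.domRestrict p.domain).dualMap := by
  have hgraph : p.graph.map (g.prodMap LinearMap.id) =
      LinearMap.range ((g.domRestrict p.domain).prod p.toFun) := by
    rw [graph_eq_range_prod, ← LinearMap.range_comp]
    rfl
  rw [hgraph, LinearMap.range_eq_top, surjective_prod_iff_notMem_range_dualMap,
    ← LinearMap.range_eq_top, LinearMap.range_domRestrict]

theorem natCard_dual [FiniteDimensional K W] : Nat.card (Dual K W) = Nat.card K ^ finrank K W := by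
  rw [natCard_eq_pow_finrank (K := K), Subspace.dual_finrank_eq]

end SubspacesOfProdField

section FiniteField

variable {K W Y : Type*} [Field K] [Finite K] [AddCommGroup W] [Module K W]
  [FiniteDimensional K W] [AddCommGroup Y] [Module K Y]

theorem natCard_notMem_range_dualMap {f : W →ₗ[K] Y} (hf : Function.Surjective f) :
    (Nat.card {φ : Dual K W // φ ∉ LinearMap.range f.dualMap} : ℤ) =
      (Nat.card K : ℤ) ^ finrank K W - (Nat.card K : ℤ) ^ finrank K Y := by
  classical
  have : FiniteDimensional K Y := Module.Finite.of_surjective f hf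
  have : Finite (Dual K W) := Module.finite_of_finite K
  have hrange : Nat.card {φ : Dual K W // φ ∈ LinearMap.range f.dualMap} =
      Nat.card K ^ finrank K Y := by
    rw [← natCard_dual]
    exact (Nat.card_congr
      (Equiv.ofInjective _ (LinearMap.dualMap_injective_of_surjective hf))).symm
  have hsplit := Nat.card_congr (Equiv.sumCompl fun φ : Dual K W => φ ∈ LinearMap.range f.dualMap)
  rw [Nat.card_sum, hrange, natCard_dual] at hsplit
  rw [eq_sub_iff_add_eq']
  exact_mod_cast hsplit

theorem natCard_submodule_prod_eq_add (Q : Submodule K (W × K) → Prop) :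
    Nat.card {V // Q V} =
      Nat.card {U : Submodule K W // Q (U.comap (LinearMap.fst K W K))} +
        Nat.card {p : W →ₗ.[K] K // Q p.graph} := by
  have : Finite W := Module.finite_of_finite K
  have : Finite (W →ₗ.[K] K) := Finite.of_injective _ fun _ _ => LinearPMap.eq_of_eq_graph
  let decomposition := Equiv.ofBijective _ (bijective_sumElim_comap_fst_graph (K := K) (W := W))
  rw [← Nat.card_sum, ← Nat.card_congr (decomposition.subtypeEquivOfSubtype (p := Q))]
  exact Nat.card_congr Equiv.subtypeSum

theorem natCard_linearPMap_notMem_range_dualMap (g : W →ₗ[K] Y) (P : Submodule K W → Prop)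
    (k : ℕ) :
    (Nat.card {p : W →ₗ.[K] K // (finrank K p.domain = k ∧ P p.domain ∧ p.domain.map g = ⊤) ∧
        p.toFun ∉ LinearMap.range (g.domRestrict p.domain).dualMap} : ℤ) =
      ((Nat.card K : ℤ) ^ k - (Nat.card K : ℤ) ^ finrank K Y) *
        Nat.card {U : Submodule K W // finrank K U = k ∧ P U ∧ U.map g = ⊤} := by
  have : Finite W := Module.finite_of_finite K
  have (U : Submodule K W) : Finite (Dual K U) := Module.finite_of_finite K
  have := Fintype.ofFinite {U : Submodule K W // finrank K U = k ∧ P U ∧ U.map g = ⊤}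
  let byDomain : {p : W →ₗ.[K] K // (finrank K p.domain = k ∧ P p.domain ∧ p.domain.map g = ⊤) ∧
        p.toFun ∉ LinearMap.range (g.domRestrict p.domain).dualMap} ≃
      Σ U : {U : Submodule K W // finrank K U = k ∧ P U ∧ U.map g = ⊤},
        {φ : Dual K U.1 // φ ∉ LinearMap.range (g.domRestrict U.1).dualMap} :=
    { toFun := fun p => ⟨⟨p.1.domain, p.2.1⟩, ⟨p.1.toFun, p.2.2⟩⟩
      invFun := fun s => ⟨⟨s.1.1, s.2.1⟩, s.1.2, s.2.2⟩ }
  have hfiber (U : {U : Submodule K W // finrank K U = k ∧ P U ∧ U.map g = ⊤}) :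
      (Nat.card {φ : Dual K U.1 // φ ∉ LinearMap.range (g.domRestrict U.1).dualMap} : ℤ) =
        (Nat.card K : ℤ) ^ k - (Nat.card K : ℤ) ^ finrank K Y := by
    obtain ⟨U, hdim, -, hU⟩ := U
    rw [natCard_notMem_range_dualMap, hdim]
    rwa [← LinearMap.range_eq_top, LinearMap.range_domRestrict]
  rw [Nat.card_congr byDomain, Nat.card_sigma, Nat.cast_sum,
    Finset.sum_congr rfl fun U _ => hfiber U, Finset.sum_const, nsmul_eq_mul, Finset.card_univ,
    ← Nat.card_eq_fintype_card, mul_comm]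

theorem natCard_submodule_prod_map_prodMap_eq_top (g : W →ₗ[K] Y) (P : Submodule K W → Prop)
    (i : ℕ) :
    (Nat.card {V : Submodule K (W × K) // finrank K V = i + 1 ∧
        P (V.map (LinearMap.fst K W K)) ∧ V.map (g.prodMap LinearMap.id) = ⊤} : ℤ) =
      Nat.card {U : Submodule K W // finrank K U = i ∧ P U ∧ U.map g = ⊤} +
        ((Nat.card K : ℤ) ^ (i + 1) - (Nat.card K : ℤ) ^ finrank K Y) *
          Nat.card {U : Submodule K W // finrank K U = i + 1 ∧ P U ∧ U.map g = ⊤} := by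
  rw [natCard_submodule_prod_eq_add, Nat.cast_add, ← natCard_linearPMap_notMem_range_dualMap]
  simp only [finrank_comap_fst, finrank_self, Nat.add_right_cancel_iff,
    Submodule.map_comap_eq_of_surjective LinearMap.fst_surjective,
    map_prodMap_comap_fst_eq_top_iff, finrank_graph, LinearPMap.graph_map_fst_eq_domain,
    map_prodMap_graph_eq_top_iff, and_assoc]

end FiniteField

section Recursion

variable {K X Y Y' : Type*} [Field K] [AddCommGroup X] [Module K X] [AddCommGroup Y] [Module K Y]
  [AddCommGroup Y'] [Module K Y']

theorem subdirectCount_eq_of_linearEquiv_prod (e : (Y × K) ≃ₗ[K] Y') (k : ℕ) :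
    subdirectCount K X Y' k =
      Nat.card {V : Submodule K ((X × Y) × K) // finrank K V = k ∧
        (V.map (LinearMap.fst K (X × Y) K)).map (LinearMap.fst K X Y) = ⊤ ∧
        V.map ((LinearMap.snd K X Y).prodMap LinearMap.id) = ⊤} := by
  let E : ((X × Y) × K) ≃ₗ[K] X × Y' :=
    (LinearEquiv.prodAssoc K X Y K).trans ((LinearEquiv.refl K X).prodCongr e)
  refine (Nat.card_congr
    ((Submodule.orderIsoMapComap E).toEquiv.subtypeEquiv fun V => ?_)).symm
  have hfst : (V.map E.toLinearMap).map (LinearMap.fst K X Y') =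
      (V.map (LinearMap.fst K (X × Y) K)).map (LinearMap.fst K X Y) := by
    rw [← Submodule.map_comp, ← Submodule.map_comp]
    rfl
  have hsnd : (V.map E.toLinearMap).map (LinearMap.snd K X Y') =
      (V.map ((LinearMap.snd K X Y).prodMap LinearMap.id)).map e.toLinearMap := by
    rw [← Submodule.map_comp, ← Submodule.map_comp]
    rfl
  change _ ↔ finrank K (V.map E.toLinearMap) = k ∧ (V.map E.toLinearMap).map _ = ⊤ ∧
    (V.map E.toLinearMap).map _ = ⊤
  rw [hfst, hsnd, E.finrank_map_eq, Submodule.map_eq_top_iff]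

theorem Nsub_recursion_general [Finite K] [FiniteDimensional K X] [FiniteDimensional K Y]
    (hY' : finrank K Y' = finrank K Y + 1) (i : ℕ) :
    (subdirectCount K X Y' (i + 1) : ℤ) =
      subdirectCount K X Y i +
        ((Nat.card K : ℤ) ^ (i + 1) - (Nat.card K : ℤ) ^ finrank K Y) *
          subdirectCount K X Y (i + 1) := by
  have : FiniteDimensional K Y' := finite_of_finrank_eq_succ hY'
  have e : (Y × K) ≃ₗ[K] Y' :=
    LinearEquiv.ofFinrankEq _ _ (by rw [finrank_prod, finrank_self, hY'])
  rw [subdirectCount_eq_of_linearEquiv_prod e]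
  exact natCard_submodule_prod_map_prodMap_eq_top (LinearMap.snd K X Y)
    (fun U => U.map (LinearMap.fst K X Y) = ⊤) i

end Recursion

theorem Nsub_eq_subdirectCount (n m i : ℕ) :
    Nsub n m i = subdirectCount (ZMod 2) (Fin n → ZMod 2) (Fin m → ZMod 2) i :=
  rfl

theorem Nsub_recursion (n m i : ℕ) :
    (Nsub n (m + 1) (i + 1) : ℤ) =
      (Nsub n m i : ℤ) + ((2 : ℤ) ^ (i + 1) - 2 ^ m) * (Nsub n m (i + 1) : ℤ) := by
  simpa [Nsub_eq_subdirectCount] using Nsub_recursion_general (K := ZMod 2)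
    (X := Fin n → ZMod 2) (Y := Fin m → ZMod 2) (Y' := Fin (m + 1) → ZMod 2) (by simp) i
end

section
/- For every τ₁ ∈ ℍ₁ and τ₂ ∈ ℍ₂, the genus 3 ansatz factors on the decomposable locus: Ξ^{(3)}(τ₁ ⊕ τ₂) = Ξ^{(1)}(τ₁) · Ξ^{(2)}(τ₂), where τ₁ ⊕ τ₂ ∈ ℍ₃ is the block-diagonal period matrix with blocks τ₁ and τ₂. -/
open scoped BigOperators

noncomputable def Gform (g i : ℕ) (τ : Matrix (Fin g) (Fin g) ℂ) : ℂ :=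
  Pform g i (2 ^ (4 - i)) τ

noncomputable def Xi1 (τ : Matrix (Fin 1) (Fin 1) ℂ) : ℂ :=
  (1 / 2) * (Gform 1 0 τ - Gform 1 1 τ)

noncomputable def Xi2 (τ : Matrix (Fin 2) (Fin 2) ℂ) : ℂ :=
  (1 / 4) * (Gform 2 0 τ - Gform 2 1 τ + 2 * Gform 2 2 τ)

noncomputable def Xi3 (τ : Matrix (Fin 3) (Fin 3) ℂ) : ℂ :=
  (1 / 8) * (Gform 3 0 τ - Gform 3 1 τ + 2 * Gform 3 2 τ - 8 * Gform 3 3 τ)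

noncomputable def Xi4 (τ : Matrix (Fin 4) (Fin 4) ℂ) : ℂ :=
  (1 / 16) * (Gform 4 0 τ - Gform 4 1 τ + 2 * Gform 4 2 τ - 8 * Gform 4 3 τ +
    64 * Gform 4 4 τ)

/-!
Theta constants are multiplicative on block-diagonal matrices, and odd ones vanish, so `P_V`
vanishes unless `V` is totally isotropic; in particular `dim V ≤ g`. If `V` has projections `V₁`,
`V₂`, then `P_V ^ (2 ^ (4 - dim V))` at `τ₁ ⊕ τ₂` is the product of the corresponding terms of `V₁`
and `V₂`, since the fibres of `V → Vⱼ` have `2 ^ (dim V - dim Vⱼ)` elements.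

The coefficient `(-1)^i 2^(i(i-1)/2)` of `G_i` is the Möbius function `μ(0, V)` of the lattice of
subspaces for `dim V = i`. Hence the sum of `μ(0, V)` over the `V` with projections in `W₁` and `W₂`
is `1` if `W₁ = W₂ = 0` and `0` otherwise, and Möbius inversion shows that the sum over the `V` with
projections exactly `V₁` and `V₂` is `μ(0, V₁) μ(0, V₂)`. Grouping the subspaces `V` by their
projections therefore factors the ansatz, in every genus up to `4`.
-/

open Module Finset

/-! ### The Möbius function of the subspace lattice -/

section SubspaceLattice

/-- The Möbius function `μ(0, V)` of the lattice of subspaces of a vector space over a field with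
`q` elements, for a subspace `V` of dimension `d`. -/
def subspaceMu (q d : ℕ) : ℤ := (-1) ^ d * (q : ℤ) ^ d.choose 2

lemma subspaceMu_zero (q : ℕ) : subspaceMu q 0 = 1 := by simp [subspaceMu]

lemma subspaceMu_succ (q d : ℕ) : subspaceMu q (d + 1) = -((q : ℤ) ^ d * subspaceMu q d) := by
  have h_choose : (d + 1).choose 2 = d + d.choose 2 := by simp [Nat.choose_succ_succ' d 1]
  rw [subspaceMu, subspaceMu, h_choose]
  ring

variable {K M : Type*} [Field K] [AddCommGroup M] [Module K M]

section Functional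

variable (φ : Dual K M)

lemma finrank_inf_ker_add_one [FiniteDimensional K M] {V : Submodule K M}
    (hV : ¬ V ≤ LinearMap.ker φ) :
    finrank K ↥(V ⊓ LinearMap.ker φ) + 1 = finrank K V := by
  have h_ne : φ.domRestrict V ≠ 0 := fun h ↦
    hV fun v hv ↦ LinearMap.congr_fun h (⟨v, hv⟩ : V)
  have h_ker : V ⊓ LinearMap.ker φ = (LinearMap.ker (φ.domRestrict V)).map V.subtype := by
    rw [LinearMap.domRestrict, LinearMap.ker_comp, Submodule.map_comap_subtype]
  rw [h_ker, Submodule.finrank_map_subtype_eq]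
  exact Dual.finrank_ker_add_one_of_ne_zero h_ne

open Classical in
lemma card_filter_mem_eq_one [Fintype K] [Fintype M] {V : Submodule K M}
    (hV : ¬ V ≤ LinearMap.ker φ) :
    #{x | φ x = 1 ∧ x ∈ V} = Fintype.card K ^ finrank K ↥(V ⊓ LinearMap.ker φ) := by
  obtain ⟨x₀, hx₀V, hx₀⟩ : ∃ x₀ ∈ V, φ x₀ = 1 := by
    obtain ⟨v, hvV, hv⟩ := SetLike.not_le_iff_exists.1 hV
    exact ⟨(φ v)⁻¹ • v, V.smul_mem _ hvV, by simp [inv_mul_cancel₀ hv]⟩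
  rw [← card_eq_pow_finrank, ← Fintype.card_coe]
  refine (Fintype.card_congr ((Equiv.addRight x₀).subtypeEquiv fun y ↦ ?_)).symm
  simp [hx₀, V.add_mem_iff_left hx₀V, and_comm]

variable {φ}

lemma isCompl_ker_span_singleton {x : M} (hx : φ x = 1) :
    IsCompl (LinearMap.ker φ) (K ∙ x) := by
  have h_surj : Function.Surjective φ := fun a ↦ ⟨a • x, by simp [hx]⟩
  exact Submodule.isCompl_span_singleton_of_isCoatom_of_notMem
    (LinearMap.isCoatom_ker_of_surjective h_surj) (by simp [hx])

open Classical in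
lemma sum_inf_ker_of_mem [Fintype M] {R : Type*} [AddCommMonoid R] {x : M} (hx : φ x = 1)
    (f : Submodule K M → R) :
    ∑ V with x ∈ V, f (V ⊓ LinearMap.ker φ) = ∑ U with U ≤ LinearMap.ker φ, f U := by
  have h := isCompl_ker_span_singleton hx
  refine sum_nbij' (· ⊓ LinearMap.ker φ) (· ⊔ K ∙ x) (by simp) ?_ ?_ ?_ (by simp)
  · exact fun U _ ↦ by simp [Submodule.mem_sup_right (Submodule.mem_span_singleton_self x)]
  · intro V hV
    have hxV : K ∙ x ≤ V := by simpa using hV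
    rw [inf_sup_assoc_of_le _ hxV, h.sup_eq_top, inf_top_eq]
  · intro U hU
    have hU_ker : U ≤ LinearMap.ker φ := by simpa using hU
    rw [sup_inf_assoc_of_le _ hU_ker, inf_comm, h.inf_eq_bot, sup_bot_eq]

end Functional

section Moebius

variable [Fintype M]

open Classical in
lemma sum_le_finrank {R : Type*} [AddCommMonoid R] (W : Submodule K M) (f : ℕ → R) :
    ∑ V with V ≤ W, f (finrank K V) = ∑ V : Submodule K W, f (finrank K V) := by
  rw [sum_subtype (p := (· ≤ W)) _ (by simp)]
  refine (Fintype.sum_equiv (Submodule.MapSubtype.orderIso W).toEquiv _ _ fun V ↦ ?_).symm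
  exact congrArg f (Submodule.finrank_map_subtype_eq W V).symm

variable [Fintype K]

open Classical in
lemma sum_subspaceMu_not_le_ker (φ : Dual K M) :
    ∑ V with ¬ V ≤ LinearMap.ker φ, subspaceMu (Fintype.card K) (finrank K V) =
      -∑ x with φ x = 1, ∑ U with U ≤ LinearMap.ker φ,
        subspaceMu (Fintype.card K) (finrank K U) := by
  set q := Fintype.card K
  -- `V` contains `q ^ (dim V - 1)` points `x` with `φ x = 1`, and this power is the ratio of the
  -- Möbius values of `V ⊓ ker φ` and `V`; for fixed `x`, `V` is determined by `V ⊓ ker φ`.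
  have h_term (V : Submodule K M) (hV : ¬ V ≤ LinearMap.ker φ) :
      subspaceMu q (finrank K V) =
        -∑ x with φ x = 1 ∧ x ∈ V, subspaceMu q (finrank K ↥(V ⊓ LinearMap.ker φ)) := by
    rw [← finrank_inf_ker_add_one φ hV, subspaceMu_succ, sum_const, card_filter_mem_eq_one φ hV,
      nsmul_eq_mul, Nat.cast_pow]
  rw [sum_congr rfl fun V hV ↦ h_term V (mem_filter.1 hV).2, sum_neg_distrib, neg_inj]
  calc ∑ V with ¬ V ≤ LinearMap.ker φ, ∑ x with φ x = 1 ∧ x ∈ V,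
        subspaceMu q (finrank K ↥(V ⊓ LinearMap.ker φ))
      = ∑ x with φ x = 1, ∑ V with x ∈ V,
          subspaceMu q (finrank K ↥(V ⊓ LinearMap.ker φ)) := by
        refine sum_comm' fun V x ↦ ?_
        simp only [mem_filter_univ]
        exact ⟨fun h ↦ h.2.symm, fun ⟨hxV, hx⟩ ↦
          ⟨fun hV ↦ one_ne_zero (hx.symm.trans (hV hxV)), hx, hxV⟩⟩
    _ = _ := sum_congr rfl fun x hx ↦
      sum_inf_ker_of_mem (mem_filter.1 hx).2 fun V ↦ subspaceMu q (finrank K V)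

open Classical in
lemma sum_subspaceMu_eq_mul_sum_ker {φ : Dual K M} (hφ : φ ≠ 0) :
    ∑ V : Submodule K M, subspaceMu (Fintype.card K) (finrank K V) =
      (1 - (Fintype.card K : ℤ) ^ finrank K (LinearMap.ker φ)) *
        ∑ U : Submodule K (LinearMap.ker φ), subspaceMu (Fintype.card K) (finrank K U) := by
  have h_card : #{x | φ x = 1} = Fintype.card K ^ finrank K (LinearMap.ker φ) := by
    have h_top : ¬ (⊤ : Submodule K M) ≤ LinearMap.ker φ := by simpa [LinearMap.ker_eq_top]
    have h := card_filter_mem_eq_one φ h_top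
    rw [top_inf_eq] at h
    simpa only [Submodule.mem_top, and_true] using h
  rw [← sum_filter_add_sum_filter_not univ (· ≤ LinearMap.ker φ), sum_subspaceMu_not_le_ker,
    sum_const, h_card, sum_le_finrank]
  simp only [nsmul_eq_mul, Nat.cast_pow]
  ring

theorem sum_subspaceMu_eq_zero [Nontrivial M] :
    ∑ V : Submodule K M, subspaceMu (Fintype.card K) (finrank K V) = 0 := by
  classical
  induction hn : finrank K M using Nat.strong_induction_on generalizing M with
  | _ n ih =>
    obtain ⟨x, hx⟩ := exists_ne (0 : M)
    obtain ⟨φ, hφx⟩ := Projective.exists_dual_ne_zero K hx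
    have hφ : φ ≠ 0 := fun h ↦ hφx (by simp [h])
    rw [sum_subspaceMu_eq_mul_sum_ker hφ]
    cases subsingleton_or_nontrivial (LinearMap.ker φ) with
    | inl _ => simp [finrank_zero_of_subsingleton]
    | inr _ =>
      have h_lt : finrank K (LinearMap.ker φ) < n := by
        have := Dual.finrank_ker_add_one_of_ne_zero hφ
        lia
      rw [ih _ h_lt rfl, mul_zero]

open Classical in
theorem sum_le_subspaceMu (W : Submodule K M) :
    ∑ V with V ≤ W, subspaceMu (Fintype.card K) (finrank K V) = if W = ⊥ then 1 else 0 := by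
  split_ifs with hW
  · subst hW
    simp [filter_eq', subspaceMu_zero]
  · have := (Submodule.nontrivial_iff_ne_bot (p := W)).2 hW
    rw [sum_le_finrank, sum_subspaceMu_eq_zero]

end Moebius

section Subdirect

lemma eq_of_sum_le_eq {P R : Type*} [PartialOrder P] [OrderBot P] [Fintype P] [DecidableLE P]
    [Ring R] {f g : P → R} (h : ∀ x, ∑ y with y ≤ x, f y = ∑ y with y ≤ x, g y) : f = g := by
  classical
  let _ : LocallyFiniteOrder P := Fintype.toLocallyFiniteOrder
  have h_Iic (x : P) : ({y | y ≤ x} : Finset P) = Iic x := by ext; simp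
  simp only [h_Iic] at h
  ext x
  rw [IncidenceAlgebra.moebius_inversion_bot f _ (fun _ ↦ rfl) x,
    IncidenceAlgebra.moebius_inversion_bot g _ (fun _ ↦ rfl) x]
  simp only [h]

variable {A B : Type*} [AddCommGroup A] [Module K A] [AddCommGroup B] [Module K B]
  {p₁ : M →ₗ[K] A} {p₂ : M →ₗ[K] B}

lemma comap_inf_comap_eq_bot_iff (hp : Function.Bijective (p₁.prod p₂)) (V₁ : Submodule K A)
    (V₂ : Submodule K B) : V₁.comap p₁ ⊓ V₂.comap p₂ = ⊥ ↔ V₁ = ⊥ ∧ V₂ = ⊥ := by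
  have h_prod : V₁.comap p₁ ⊓ V₂.comap p₂ = (V₁.prod V₂).comap (p₁.prod p₂) := rfl
  have h_bot : (⊥ : Submodule K M) = (⊥ : Submodule K (A × B)).comap (p₁.prod p₂) :=
    (LinearMap.ker_eq_bot.2 hp.1).symm
  rw [h_prod, h_bot, (Submodule.comap_injective_of_surjective hp.2).eq_iff,
    Submodule.prod_eq_bot_iff]

open Classical in
theorem sum_subspaceMu_map_eq [Fintype K] [Fintype M] (hp : Function.Bijective (p₁.prod p₂))
    (V₁ : Submodule K A) (V₂ : Submodule K B) :
    ∑ V : Submodule K M with (V.map p₁, V.map p₂) = (V₁, V₂),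
        subspaceMu (Fintype.card K) (finrank K V) =
      subspaceMu (Fintype.card K) (finrank K V₁) * subspaceMu (Fintype.card K) (finrank K V₂) := by
  have : Finite (A × B) := Finite.of_surjective _ hp.surjective
  let _ : Fintype A := @Fintype.ofFinite A (Finite.prod_left B)
  let _ : Fintype B := @Fintype.ofFinite B (Finite.prod_right A)
  set μ := subspaceMu (Fintype.card K)
  suffices h : (fun U : Submodule K A × Submodule K B ↦
      ∑ V : Submodule K M with (V.map p₁, V.map p₂) = U, μ (finrank K V)) =
      fun U ↦ μ (finrank K U.1) * μ (finrank K U.2) from congrFun h (V₁, V₂)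
  refine eq_of_sum_le_eq fun ⟨W₁, W₂⟩ ↦ ?_
  calc ∑ U with U ≤ (W₁, W₂), ∑ V : Submodule K M with (V.map p₁, V.map p₂) = U, μ (finrank K V)
      = ∑ V with V ≤ W₁.comap p₁ ⊓ W₂.comap p₂, μ (finrank K V) := by
        rw [sum_fiberwise_eq_sum_filter]
        simp only [mem_filter_univ, Prod.mk_le_mk, Submodule.map_le_iff_le_comap, le_inf_iff]
    _ = if W₁ = ⊥ ∧ W₂ = ⊥ then 1 else 0 := by
        simp only [μ, sum_le_subspaceMu, comap_inf_comap_eq_bot_iff hp]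
    _ = (∑ U₁ with U₁ ≤ W₁, μ (finrank K U₁)) * ∑ U₂ with U₂ ≤ W₂, μ (finrank K U₂) := by
        simp only [μ, sum_le_subspaceMu, ite_and, ite_mul, one_mul, zero_mul]
    _ = ∑ U with U ≤ (W₁, W₂), μ (finrank K U.1) * μ (finrank K U.2) := by
        rw [sum_mul_sum, ← sum_product']
        congr 1
        ext; simp [Prod.le_def]

open Classical in
theorem sum_subspaceMu_mul_map [Fintype K] [Fintype M] [Fintype A] [Fintype B] {R : Type*}
    [CommRing R] (hp : Function.Bijective (p₁.prod p₂)) (f₁ : Submodule K A → R)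
    (f₂ : Submodule K B → R) :
    ∑ V : Submodule K M, (subspaceMu (Fintype.card K) (finrank K V) : R) *
        (f₁ (V.map p₁) * f₂ (V.map p₂)) =
      (∑ V₁ : Submodule K A, (subspaceMu (Fintype.card K) (finrank K V₁) : R) * f₁ V₁) *
        ∑ V₂ : Submodule K B, (subspaceMu (Fintype.card K) (finrank K V₂) : R) * f₂ V₂ := by
  let μ (d : ℕ) : R := subspaceMu (Fintype.card K) d
  have h_fiber (U : Submodule K A × Submodule K B) :
      ∑ V : Submodule K M with (V.map p₁, V.map p₂) = U, μ (finrank K V) =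
        μ (finrank K U.1) * μ (finrank K U.2) := by
    simpa only [Int.cast_sum, Int.cast_mul] using
      congrArg (Int.cast : ℤ → R) (sum_subspaceMu_map_eq hp U.1 U.2)
  calc ∑ V : Submodule K M, μ (finrank K V) * (f₁ (V.map p₁) * f₂ (V.map p₂))
      = ∑ U : Submodule K A × Submodule K B, ∑ V : Submodule K M with (V.map p₁, V.map p₂) = U,
          μ (finrank K V) * (f₁ U.1 * f₂ U.2) := by
        rw [← sum_fiberwise univ fun V : Submodule K M ↦ (V.map p₁, V.map p₂)]
        refine sum_congr rfl fun U _ ↦ sum_congr rfl fun V hV ↦ ?_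
        rw [← (mem_filter.1 hV).2]
    _ = ∑ U : Submodule K A × Submodule K B,
          μ (finrank K U.1) * f₁ U.1 * (μ (finrank K U.2) * f₂ U.2) := by
        refine sum_congr rfl fun U _ ↦ ?_
        rw [← sum_mul, h_fiber, mul_mul_mul_comm]
    _ = (∑ V₁ : Submodule K A, μ (finrank K V₁) * f₁ V₁) *
          ∑ V₂ : Submodule K B, μ (finrank K V₂) * f₂ V₂ := by
        rw [sum_mul_sum, Fintype.sum_prod_type]

end Subdirect

end SubspaceLattice

/-! ### Products over images of subspaces -/

section ProdMap

variable {K M A : Type*} [Field K] [Fintype K] [AddCommGroup M] [Module K M] [Fintype M]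
  [AddCommGroup A] [Module K A]

lemma card_fiber_eq_pow_finrank_ker [DecidableEq A] (f : M →ₗ[K] A) {y : A}
    (hy : y ∈ LinearMap.range f) :
    #{x | f x = y} = Fintype.card K ^ finrank K (LinearMap.ker f) := by
  classical
  have h_zero : #{x | f x = y} = #{x | f x = 0} :=
    AddMonoidHom.card_fiber_eq_of_mem_range f.toAddMonoidHom hy ⟨0, map_zero f⟩
  rw [h_zero, ← card_eq_pow_finrank, ← Fintype.card_coe]
  exact Fintype.card_congr (Equiv.subtypeEquivRight fun x ↦ by simp)

open Classical in
lemma prod_comp_linearMap {R : Type*} [CommMonoid R] (V : Submodule K M) (p : M →ₗ[K] A)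
    [Fintype A] (t : A → R) :
    ∏ v : V, t (p v) =
      (∏ w : V.map p, t w) ^ Fintype.card K ^ (finrank K V - finrank K (V.map p)) := by
  let f : V →ₗ[K] V.map p := p.submoduleMap V
  have h_range : LinearMap.range f = ⊤ := LinearMap.range_eq_top.2 (p.submoduleMap_surjective V)
  have h_ker : finrank K (LinearMap.ker f) = finrank K V - finrank K (V.map p) := by
    rw [← f.finrank_range_add_finrank_ker, h_range, finrank_top, Nat.add_sub_cancel_left]
  calc ∏ v : V, t (p v) = ∏ w : V.map p, ∏ v with f v = w, t w :=
        (Finset.prod_fiberwise' univ f fun w ↦ t w).symm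
    _ = ∏ w : V.map p, t w ^ Fintype.card K ^ (finrank K V - finrank K (V.map p)) := by
        refine prod_congr rfl fun w _ ↦ ?_
        rw [prod_const, card_fiber_eq_pow_finrank_ker f (by simp [h_range]), h_ker]
    _ = _ := prod_pow univ _ _

end ProdMap

/-! ### Isotropic subspaces of characteristics -/

section Isotropic

variable {g : ℕ}

/-- The Weil pairing `weil` as a bilinear form: the polarization of the parity form
`[ε; δ] ↦ ε · δ` on characteristics. -/
def weilForm (g : ℕ) : LinearMap.BilinForm (ZMod 2) (ThetaChar g) :=
  LinearMap.mk₂ (ZMod 2) weil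
    (fun v v' w ↦ by
      simp only [weil, Prod.fst_add, Prod.snd_add, Pi.add_apply, add_mul, sum_add_distrib]
      ring)
    (fun c v w ↦ by simp [weil, mul_sum, mul_add, mul_assoc])
    (fun v w w' ↦ by
      simp only [weil, Prod.fst_add, Prod.snd_add, Pi.add_apply, mul_add, sum_add_distrib]
      ring)
    (fun c v w ↦ by simp [weil, mul_sum, mul_add, mul_left_comm])

lemma weilForm_isSymm : (weilForm g).IsSymm :=
  ⟨fun v w ↦ by simp [weilForm, weil, mul_comm, add_comm]⟩

lemma weilForm_nondegenerate : (weilForm g).Nondegenerate := by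
  refine weilForm_isSymm.isRefl.nondegenerate_iff_separatingLeft.2 fun v hv ↦ ?_
  refine Prod.ext (funext fun i ↦ ?_) (funext fun i ↦ ?_)
  · simpa [weilForm, weil, Pi.single_apply] using hv (0, Pi.single i 1)
  · simpa [weilForm, weil, Pi.single_apply] using hv (Pi.single i 1, 0)

lemma weilForm_eq_zero_of_evenChar {v w : ThetaChar g} (hv : evenChar v) (hw : evenChar w)
    (hvw : evenChar (v + w)) : weilForm g v w = 0 := by
  have h_polar : (∑ i, (v + w).1 i * (v + w).2 i) =
      (∑ i, v.1 i * v.2 i) + (∑ i, w.1 i * w.2 i) + weilForm g v w := by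
    simp only [weilForm, LinearMap.mk₂_apply, weil, Prod.fst_add, Prod.snd_add, Pi.add_apply,
      ← sum_add_distrib]
    exact sum_congr rfl fun i _ ↦ by ring
  rw [evenChar] at hv hw hvw
  rwa [hv, hw, hvw, zero_add, zero_add, eq_comm] at h_polar

theorem finrank_le_of_forall_evenChar {V : Submodule (ZMod 2) (ThetaChar g)}
    (hV : ∀ v ∈ V, evenChar v) : finrank (ZMod 2) V ≤ g := by
  have h_isotropic : V ≤ (weilForm g).orthogonal V := fun w hw v hv ↦
    weilForm_eq_zero_of_evenChar (hV v hv) (hV w hw) (hV _ (V.add_mem hv hw))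
  have h_le := Submodule.finrank_mono h_isotropic
  have h_dim : finrank (ZMod 2) (ThetaChar g) = g + g := by simp
  rw [LinearMap.BilinForm.finrank_orthogonal weilForm_nondegenerate, h_dim] at h_le
  lia

end Isotropic

/-! ### Theta constants -/

section ThetaConvergence

open scoped MatrixOrder in
lemma exists_pos_mul_dotProduct_le {ι : Type*} [Fintype ι] {A : Matrix ι ι ℝ} (hA : A.PosDef) :
    ∃ c > 0, ∀ x : ι → ℝ, c * (x ⬝ᵥ x) ≤ x ⬝ᵥ A.mulVec x := by
  classical
  obtain h | h := isEmpty_or_nonempty ι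
  · exact ⟨1, one_pos, fun x ↦ by simp⟩
  obtain ⟨c, hc, hcA⟩ := (CFC.exists_pos_algebraMap_le_iff hA.isHermitian.isSelfAdjoint).2
    fun _ hx ↦ hA.isStrictlyPositive.spectrum_pos hx
  refine ⟨c, hc, fun x ↦ ?_⟩
  have h_nonneg := (Matrix.le_iff.1 hcA).dotProduct_mulVec_nonneg x
  simpa [Matrix.sub_mulVec, Algebra.algebraMap_eq_smul_one, Matrix.smul_mulVec] using h_nonneg

lemma summable_prod_apply {α : Type*} {g : ℕ} {f : Fin g → α → ℝ} (h_nonneg : ∀ i, 0 ≤ f i)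
    (hf : ∀ i, Summable (f i)) : Summable fun x : Fin g → α ↦ ∏ i, f i (x i) := by
  induction g with
  | zero => exact .of_finite
  | succ g ih =>
    rw [← (Fin.consEquiv fun _ ↦ α).summable_iff]
    simpa [Function.comp_def, Fin.prod_univ_succ] using
      (hf 0).mul_of_nonneg (ih (fun i ↦ h_nonneg i.succ) fun i ↦ hf i.succ)
        (h_nonneg 0) fun x ↦ prod_nonneg fun i _ ↦ h_nonneg i.succ (x i)

variable {g : ℕ}

/-- The `n`-th term of the series defining the theta constant `theta v τ`. -/
noncomputable def thetaTerm (v : ThetaChar g) (τ : Matrix (Fin g) (Fin g) ℂ) (n : Fin g → ℤ) : ℂ :=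
  Complex.exp ((Real.pi : ℂ) * Complex.I *
    ((∑ i, ∑ j, ((n i : ℂ) + ((v.1 i).val : ℂ) / 2) * τ i j *
        ((n j : ℂ) + ((v.1 j).val : ℂ) / 2)) +
      ∑ i, ((n i : ℂ) + ((v.1 i).val : ℂ) / 2) * ((v.2 i).val : ℂ)))

lemma theta_eq_tsum (v : ThetaChar g) (τ : Matrix (Fin g) (Fin g) ℂ) :
    theta v τ = ∑' n, thetaTerm v τ n := rfl

/-- The point `n + ε / 2` of the shifted lattice over which `theta [ε; δ] τ` is summed. -/
noncomputable def thetaPoint (v : ThetaChar g) (n : Fin g → ℤ) : Fin g → ℝ :=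
  fun i ↦ n i + (v.1 i).val / 2

lemma norm_thetaTerm (v : ThetaChar g) (τ : Matrix (Fin g) (Fin g) ℂ) (n : Fin g → ℤ) :
    ‖thetaTerm v τ n‖ =
      Real.exp (-Real.pi * (thetaPoint v n ⬝ᵥ (τ.map Complex.im).mulVec (thetaPoint v n))) := by
  have h_point (i : Fin g) : (n i : ℂ) + ((v.1 i).val : ℂ) / 2 = thetaPoint v n i := by
    simp only [thetaPoint]
    push_cast
    rfl
  have h_real : (∑ i, (thetaPoint v n i : ℂ) * ((v.2 i).val : ℂ)).im = 0 := by
    rw [Complex.im_sum]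
    exact sum_eq_zero fun i _ ↦ by rw [← Complex.ofReal_natCast, ← Complex.ofReal_mul,
      Complex.ofReal_im]
  have h_quad : (∑ i, ∑ j, (thetaPoint v n i : ℂ) * τ i j * thetaPoint v n j).im =
      thetaPoint v n ⬝ᵥ (τ.map Complex.im).mulVec (thetaPoint v n) := by
    simp [dotProduct, Matrix.mulVec, mul_sum, mul_assoc]
  rw [thetaTerm, Complex.norm_exp, ← h_quad]
  simp only [h_point]
  rw [mul_assoc, Complex.re_ofReal_mul, Complex.I_mul_re, Complex.add_im, h_real, add_zero,
    mul_neg, neg_mul]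

lemma summable_exp_neg_norm_sq_thetaPoint (v : ThetaChar g) {c : ℝ} (hc : 0 < c) :
    Summable fun n ↦ Real.exp (-Real.pi * (c * (thetaPoint v n ⬝ᵥ thetaPoint v n))) := by
  have h_gauss (i : Fin g) :
      Summable fun m : ℤ ↦ Real.exp (-Real.pi * (m + ((v.1 i).val : ℝ) / 2) ^ 2 * c) :=
    (HurwitzZeta.hasSum_int_evenKernel _ hc).summable
  refine (summable_prod_apply (fun _ _ ↦ (Real.exp_pos _).le) h_gauss).congr fun n ↦ ?_
  rw [← Real.exp_sum, ← sum_mul, ← mul_sum]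
  simp only [dotProduct, thetaPoint, ← sq]
  ring_nf

theorem summable_norm_thetaTerm (v : ThetaChar g) {τ : Matrix (Fin g) (Fin g) ℂ}
    (hτ : (τ.map Complex.im).PosDef) : Summable fun n ↦ ‖thetaTerm v τ n‖ := by
  obtain ⟨c, hc, h_le⟩ := exists_pos_mul_dotProduct_le hτ
  refine (summable_exp_neg_norm_sq_thetaPoint v hc).of_nonneg_of_le (fun _ ↦ norm_nonneg _)
    fun n ↦ ?_
  rw [norm_thetaTerm, Real.exp_le_exp]
  exact mul_le_mul_of_nonpos_left (h_le _) (neg_nonpos.2 Real.pi_pos.le)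

end ThetaConvergence

section ThetaParity

variable {g : ℕ}

lemma thetaTerm_neg_sub (v : ThetaChar g) (τ : Matrix (Fin g) (Fin g) ℂ) (n : Fin g → ℤ) :
    thetaTerm v τ (fun i ↦ -n i - (v.1 i).val) =
      (-1) ^ (∑ i, (v.1 i).val * (v.2 i).val) * thetaTerm v τ n := by
  set N := ∑ i, (v.1 i).val * (v.2 i).val with hN
  set m : ℤ := ∑ i, n i * (v.2 i).val with hm
  have h_point (i : Fin g) : ((-n i - (v.1 i).val : ℤ) : ℂ) + ((v.1 i).val : ℂ) / 2 =
      -((n i : ℂ) + ((v.1 i).val : ℂ) / 2) := by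
    push_cast
    ring
  have h_linear : ∑ i, ((n i : ℂ) + ((v.1 i).val : ℂ) / 2) * ((v.2 i).val : ℂ) = m + N / 2 := by
    rw [hm, hN]
    push_cast
    rw [sum_div, ← sum_add_distrib]
    exact sum_congr rfl fun i _ ↦ by ring
  have h_sign : (-1 : ℂ) ^ N = Complex.exp (-(N * (Real.pi * Complex.I))) := by
    rw [Complex.exp_neg, Complex.exp_nat_mul, Complex.exp_pi_mul_I, ← inv_pow, inv_neg_one]
  simp only [thetaTerm, h_point, neg_mul, mul_neg, neg_neg, sum_neg_distrib, h_linear]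
  rw [h_sign, ← Complex.exp_add, Complex.exp_eq_exp_iff_exists_int]
  exact ⟨-m, by push_cast; ring⟩

theorem theta_eq_zero_of_not_evenChar {v : ThetaChar g} (hv : ¬ evenChar v)
    (τ : Matrix (Fin g) (Fin g) ℂ) : theta v τ = 0 := by
  have h_odd : Odd (∑ i, (v.1 i).val * (v.2 i).val) := by
    rw [← Nat.not_even_iff_odd, ← ZMod.natCast_eq_zero_iff_even]
    simpa [evenChar] using hv
  let reflect : (Fin g → ℤ) ≃ (Fin g → ℤ) :=
    Function.Involutive.toPerm (fun n i ↦ -n i - (v.1 i).val) fun n ↦ by ext; simp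
  have h_neg : theta v τ = -theta v τ := by
    simp only [theta_eq_tsum, ← tsum_neg]
    rw [← reflect.tsum_eq]
    refine tsum_congr fun n ↦ (thetaTerm_neg_sub v τ n).trans ?_
    rw [h_odd.neg_one_pow, neg_one_mul]
  exact self_eq_neg.1 h_neg

end ThetaParity

section ThetaBlock

variable {k l : ℕ}

lemma thetaTerm_blockDiag (v : ThetaChar (k + l)) (τ₁ : Matrix (Fin k) (Fin k) ℂ)
    (τ₂ : Matrix (Fin l) (Fin l) ℂ) (m : Fin k → ℤ) (n : Fin l → ℤ) :
    thetaTerm v (blockDiag τ₁ τ₂) (Fin.append m n) =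
      thetaTerm (chproj1 k l v) τ₁ m * thetaTerm (chproj2 k l v) τ₂ n := by
  simp only [thetaTerm]
  rw [← Complex.exp_add, ← mul_add]
  congr 2
  simp only [blockDiag, chproj1, chproj2, LinearMap.prodMap_apply, LinearMap.funLeft_apply,
    Fin.sum_univ_add, Fin.append_left, Fin.append_right, Matrix.reindex_apply,
    Matrix.submatrix_apply, finSumFinEquiv_symm_apply_castAdd, finSumFinEquiv_symm_apply_natAdd,
    Matrix.fromBlocks_apply₁₁, Matrix.fromBlocks_apply₁₂, Matrix.fromBlocks_apply₂₁,
    Matrix.fromBlocks_apply₂₂, Matrix.zero_apply, mul_zero, zero_mul, sum_const_zero, add_zero,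
    zero_add]
  ring

theorem theta_blockDiag (v : ThetaChar (k + l)) {τ₁ : Matrix (Fin k) (Fin k) ℂ}
    {τ₂ : Matrix (Fin l) (Fin l) ℂ} (hτ₁ : (τ₁.map Complex.im).PosDef)
    (hτ₂ : (τ₂.map Complex.im).PosDef) :
    theta v (blockDiag τ₁ τ₂) = theta (chproj1 k l v) τ₁ * theta (chproj2 k l v) τ₂ := by
  simp only [theta_eq_tsum]
  rw [tsum_mul_tsum_of_summable_norm (summable_norm_thetaTerm _ hτ₁)
    (summable_norm_thetaTerm _ hτ₂), ← (Fin.appendEquiv k l).tsum_eq]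
  exact tsum_congr fun mn ↦ thetaTerm_blockDiag v τ₁ τ₂ mn.1 mn.2

lemma chproj1_prod_chproj2_bijective (k l : ℕ) :
    Function.Bijective ((chproj1 k l).prod (chproj2 k l)) := by
  refine Function.bijective_iff_has_inverse.2
    ⟨fun vw ↦ (Fin.append vw.1.1 vw.2.1, Fin.append vw.1.2 vw.2.2), fun v ↦ ?_, fun vw ↦ ?_⟩
  · ext i <;> refine i.addCases (fun j ↦ ?_) fun j ↦ ?_ <;>
      simp [chproj1, chproj2, LinearMap.funLeft_apply]
  · ext i <;> simp [chproj1, chproj2, LinearMap.funLeft_apply]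

end ThetaBlock

/-! ### The ansatz on block-diagonal matrices -/

section SubspaceProduct

variable {g k l : ℕ}

open Classical in
lemma Pset_coe_eq_prod (V : Submodule (ZMod 2) (ThetaChar g)) (τ : Matrix (Fin g) (Fin g) ℂ) :
    Pset (V : Set (ThetaChar g)) τ = ∏ v : V, theta (v : ThetaChar g) τ := by
  rw [Pset, ← finprod_set_coe_eq_finprod_mem, ← finprod_eq_prod_of_fintype]
  rfl

lemma Pset_eq_zero_of_lt_finrank {V : Submodule (ZMod 2) (ThetaChar g)}
    (hV : g < finrank (ZMod 2) V) (τ : Matrix (Fin g) (Fin g) ℂ) :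
    Pset (V : Set (ThetaChar g)) τ = 0 := by
  classical
  obtain ⟨v, hvV, hv⟩ : ∃ v ∈ V, ¬ evenChar v := by
    by_contra! h_even
    exact hV.not_ge (finrank_le_of_forall_evenChar h_even)
  rw [Pset_coe_eq_prod]
  exact prod_eq_zero (mem_univ (⟨v, hvV⟩ : V)) (theta_eq_zero_of_not_evenChar hv τ)

lemma Pset_blockDiag {τ₁ : Matrix (Fin k) (Fin k) ℂ} {τ₂ : Matrix (Fin l) (Fin l) ℂ}
    (hτ₁ : (τ₁.map Complex.im).PosDef) (hτ₂ : (τ₂.map Complex.im).PosDef)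
    (V : Submodule (ZMod 2) (ThetaChar (k + l))) :
    Pset (V : Set (ThetaChar (k + l))) (blockDiag τ₁ τ₂) =
      Pset (V.map (chproj1 k l) : Set (ThetaChar k)) τ₁ ^
          2 ^ (finrank (ZMod 2) V - finrank (ZMod 2) (V.map (chproj1 k l))) *
        Pset (V.map (chproj2 k l) : Set (ThetaChar l)) τ₂ ^
          2 ^ (finrank (ZMod 2) V - finrank (ZMod 2) (V.map (chproj2 k l))) := by
  classical
  simp only [Pset_coe_eq_prod, theta_blockDiag _ hτ₁ hτ₂, prod_mul_distrib]
  rw [prod_comp_linearMap V (chproj1 k l) (theta · τ₁),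
    prod_comp_linearMap V (chproj2 k l) (theta · τ₂), ZMod.card]

/-- The contribution `P_V ^ (2 ^ (4 - dim V))` of a subspace `V` of characteristics to the form
`G_{dim V}`, with `4 - dim V` truncated at `0`. -/
noncomputable def subspaceTerm (τ : Matrix (Fin g) (Fin g) ℂ)
    (V : Submodule (ZMod 2) (ThetaChar g)) : ℂ :=
  Pset (V : Set (ThetaChar g)) τ ^ 2 ^ (4 - finrank (ZMod 2) V)

lemma subspaceTerm_eq_zero_iff {τ : Matrix (Fin g) (Fin g) ℂ}
    {V : Submodule (ZMod 2) (ThetaChar g)} :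
    subspaceTerm τ V = 0 ↔ Pset (V : Set (ThetaChar g)) τ = 0 :=
  pow_eq_zero_iff (by positivity)

theorem subspaceTerm_blockDiag {τ₁ : Matrix (Fin k) (Fin k) ℂ} {τ₂ : Matrix (Fin l) (Fin l) ℂ}
    (hkl : k + l ≤ 4) (hτ₁ : (τ₁.map Complex.im).PosDef) (hτ₂ : (τ₂.map Complex.im).PosDef)
    (V : Submodule (ZMod 2) (ThetaChar (k + l))) :
    subspaceTerm (blockDiag τ₁ τ₂) V =
      subspaceTerm τ₁ (V.map (chproj1 k l)) * subspaceTerm τ₂ (V.map (chproj2 k l)) := by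
  have h_prod := Pset_blockDiag hτ₁ hτ₂ V
  obtain hV | hV := le_or_gt (finrank (ZMod 2) V) 4
  · have h_exp (d : ℕ) (hd : d ≤ finrank (ZMod 2) V) :
        2 ^ (finrank (ZMod 2) V - d) * 2 ^ (4 - finrank (ZMod 2) V) = 2 ^ (4 - d) := by
      rw [← pow_add]
      congr 1
      lia
    simp only [subspaceTerm]
    rw [h_prod, mul_pow, ← pow_mul, ← pow_mul, h_exp _ (Submodule.finrank_map_le _ V),
      h_exp _ (Submodule.finrank_map_le _ V)]
  -- Here `4 - finrank V` truncates, but `V` contains an odd characteristic.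
  · have h_zero := Pset_eq_zero_of_lt_finrank (hkl.trans_lt hV) (blockDiag τ₁ τ₂)
    rw [subspaceTerm_eq_zero_iff.2 h_zero, eq_comm, mul_eq_zero, subspaceTerm_eq_zero_iff,
      subspaceTerm_eq_zero_iff]
    exact (mul_eq_zero.1 (h_prod.symm.trans h_zero)).imp eq_zero_of_pow_eq_zero
      eq_zero_of_pow_eq_zero

end SubspaceProduct

section Ansatz

variable {g k l : ℕ}

open Classical in
lemma Gform_eq_sum_subspaceTerm (g i : ℕ) (τ : Matrix (Fin g) (Fin g) ℂ) :
    Gform g i τ =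
      ∑ V ∈ {V : Submodule (ZMod 2) (ThetaChar g) | finrank (ZMod 2) V = i}, subspaceTerm τ V := by
  rw [Gform, Pform, finsum_mem_eq_finite_toFinset_sum _ (Set.toFinite _)]
  refine sum_congr (by ext; simp) fun V hV ↦ ?_
  rw [subspaceTerm, (mem_filter.1 hV).2]

/-- The genus `g` ansatz `Ξ^{(g)} = 2^{-g} ∑ᵢ (-1)^i 2^{i(i-1)/2} G_i^{(g)}`, which is `Xi1`, `Xi2`,
`Xi3`, `Xi4` for `g = 1, 2, 3, 4`. The exponent `2 ^ (4 - i)` in `Gform` truncates for `i > 4`, so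
only `g ≤ 4` is meaningful. -/
noncomputable def ansatz (g : ℕ) (τ : Matrix (Fin g) (Fin g) ℂ) : ℂ :=
  1 / 2 ^ g * ∑ i ∈ range (g + 1), subspaceMu 2 i * Gform g i τ

lemma Xi1_eq_ansatz (τ : Matrix (Fin 1) (Fin 1) ℂ) : Xi1 τ = ansatz 1 τ := by
  simp only [Xi1, ansatz, sum_range_succ, sum_range_zero, subspaceMu]
  norm_num
  ring

lemma Xi2_eq_ansatz (τ : Matrix (Fin 2) (Fin 2) ℂ) : Xi2 τ = ansatz 2 τ := by
  simp only [Xi2, ansatz, sum_range_succ, sum_range_zero, subspaceMu]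
  norm_num
  ring

lemma Xi3_eq_ansatz (τ : Matrix (Fin 3) (Fin 3) ℂ) : Xi3 τ = ansatz 3 τ := by
  simp only [Xi3, ansatz, sum_range_succ, sum_range_zero, subspaceMu]
  norm_num [Nat.choose]
  ring

open Classical in
lemma ansatz_eq_sum_subspaceTerm (τ : Matrix (Fin g) (Fin g) ℂ) :
    ansatz g τ = 1 / 2 ^ g * ∑ V : Submodule (ZMod 2) (ThetaChar g),
      (subspaceMu 2 (finrank (ZMod 2) V) : ℂ) * subspaceTerm τ V := by
  rw [ansatz]
  congr 1
  calc ∑ i ∈ range (g + 1), (subspaceMu 2 i : ℂ) * Gform g i τ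
      = ∑ i ∈ range (g + 1), ∑ V ∈ {V : Submodule (ZMod 2) (ThetaChar g) | finrank (ZMod 2) V = i},
          (subspaceMu 2 (finrank (ZMod 2) V) : ℂ) * subspaceTerm τ V := by
        refine sum_congr rfl fun i _ ↦ ?_
        rw [Gform_eq_sum_subspaceTerm, mul_sum]
        exact sum_congr rfl fun V hV ↦ by rw [(mem_filter.1 hV).2]
    _ = ∑ V ∈ {V : Submodule (ZMod 2) (ThetaChar g) | finrank (ZMod 2) V ∈ range (g + 1)},
          (subspaceMu 2 (finrank (ZMod 2) V) : ℂ) * subspaceTerm τ V :=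
        sum_fiberwise_eq_sum_filter _ _ _ _
    _ = ∑ V : Submodule (ZMod 2) (ThetaChar g),
          (subspaceMu 2 (finrank (ZMod 2) V) : ℂ) * subspaceTerm τ V := by
        refine sum_filter_of_ne fun V _ hV ↦ mem_range_succ_iff.2 ?_
        contrapose! hV
        rw [subspaceTerm_eq_zero_iff.2 (Pset_eq_zero_of_lt_finrank hV τ), mul_zero]

theorem Xi3_factorization_general {τ₁ : Matrix (Fin k) (Fin k) ℂ} {τ₂ : Matrix (Fin l) (Fin l) ℂ}
    (hkl : k + l ≤ 4) (hτ₁ : (τ₁.map Complex.im).PosDef) (hτ₂ : (τ₂.map Complex.im).PosDef) :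
    ansatz (k + l) (blockDiag τ₁ τ₂) = ansatz k τ₁ * ansatz l τ₂ := by
  classical
  have h_sum := sum_subspaceMu_mul_map (chproj1_prod_chproj2_bijective k l) (subspaceTerm τ₁)
    (subspaceTerm τ₂)
  rw [ZMod.card] at h_sum
  simp only [ansatz_eq_sum_subspaceTerm, subspaceTerm_blockDiag hkl hτ₁ hτ₂, h_sum]
  ring

end Ansatz

theorem Xi3_factorization (τ₁ : Matrix (Fin 1) (Fin 1) ℂ) (τ₂ : Matrix (Fin 2) (Fin 2) ℂ)
    (hτ₁ : IsSiegel τ₁) (hτ₂ : IsSiegel τ₂) :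
    Xi3 (blockDiag τ₁ τ₂) = Xi1 τ₁ * Xi2 τ₂ := by
  have h := Xi3_factorization_general (by norm_num) hτ₁.2 hτ₂.2
  rw [Xi1_eq_ansatz, Xi2_eq_ansatz, ← h]
  exact Xi3_eq_ansatz (blockDiag τ₁ τ₂)
end
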